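/- arXiv:1603.00109 — 2 statements merged into one kernel-verified Lean document; each statement's English description precedes it below -/
import Mathlib

section
/- In R = K⟨x,y⟩/(xy−1), the quotient R/I by the two-sided ideal I generated by 1−yx is isomorphic as a K-algebra to the Laurent polynomial ring K[X, X^{-1}], via x ↦ X and y ↦ X^{-1}. -/
noncomputable section

/-- The defining relation of the Toeplitz/Jacobson algebra: `x * y = 1`. -/
inductive ToeplitzRel (K : Type*) [Field K] :
    FreeAlgebra K (Fin 2) → FreeAlgebra K (Fin 2) → Prop
  | rel : ToeplitzRel K (FreeAlgebra.ι K 0 * FreeAlgebra.ι K 1) 1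

/-- The Toeplitz/Jacobson algebra `R = K⟨x,y⟩/(xy-1)`. -/
abbrev Toeplitz (K : Type*) [Field K] := RingQuot (ToeplitzRel K)

variable (K : Type*) [Field K]

/-- The image of the generator `x` in `R`. -/
def tx : Toeplitz K := RingQuot.mkAlgHom K (ToeplitzRel K) (FreeAlgebra.ι K 0)

/-- The image of the generator `y` in `R`. -/
def ty : Toeplitz K := RingQuot.mkAlgHom K (ToeplitzRel K) (FreeAlgebra.ι K 1)

/-- `f n = y^(n-1) x^(n-1) - y^n x^n`. -/
def tf (n : ℕ) : Toeplitz K := ty K ^ (n-1) * tx K ^ (n-1) - ty K ^ n * tx K ^ n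

/-- The two-sided ideal `I = ⟨1 - yx⟩` of `R`. -/
def socIdeal : TwoSidedIdeal (Toeplitz K) := TwoSidedIdeal.span {1 - ty K * tx K}

lemma tT1 : (LaurentPolynomial.T 1 * LaurentPolynomial.T (-1) : LaurentPolynomial K) = 1 := by
  rw [← LaurentPolynomial.T_add, add_neg_cancel, LaurentPolynomial.T_zero]

lemma tT2 : (LaurentPolynomial.T (-1) * LaurentPolynomial.T 1 : LaurentPolynomial K) = 1 := by
  rw [← LaurentPolynomial.T_add, neg_add_cancel, LaurentPolynomial.T_zero]

/-- The map from the Toeplitz algebra to Laurent polynomials. -/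
def tphi : Toeplitz K →ₐ[K] LaurentPolynomial K :=
  RingQuot.liftAlgHom K ⟨FreeAlgebra.lift K ![LaurentPolynomial.T 1, LaurentPolynomial.T (-1)], by
    rintro _ _ ⟨⟩
    rw [map_mul, map_one, FreeAlgebra.lift_ι_apply, FreeAlgebra.lift_ι_apply]
    exact tT1 K⟩

lemma tphi_x : tphi K (tx K) = LaurentPolynomial.T 1 := by
  simp [tphi, tx]

lemma tphi_y : tphi K (ty K) = LaurentPolynomial.T (-1) := by
  simp [tphi, ty]

lemma tphi_le : (socIdeal K).ringCon ≤ RingCon.ker (tphi K).toRingHom := by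
  have h : socIdeal K ≤ TwoSidedIdeal.ker (tphi K) := by
    rw [socIdeal, TwoSidedIdeal.span_le]
    rintro _ rfl
    rw [SetLike.mem_coe, TwoSidedIdeal.mem_ker, map_sub, map_mul, map_one, tphi_x, tphi_y, tT2,
      sub_self]
  intro a b hab
  rw [RingCon.ker_apply]
  have h2 := h ((TwoSidedIdeal.rel_iff _ _ _).1 hab)
  rw [TwoSidedIdeal.mem_ker, map_sub, sub_eq_zero] at h2
  exact h2

lemma txy : tx K * ty K = 1 := by
  have := RingQuot.mkAlgHom_rel K (ToeplitzRel.rel (K := K))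
  simpa [tx, ty] using this

/-- The unit of the quotient given by the class of x. -/
def tunit : ((socIdeal K).ringCon.Quotient)ˣ where
  val := (socIdeal K).ringCon.mkₐ K (tx K)
  inv := (socIdeal K).ringCon.mkₐ K (ty K)
  val_inv := by rw [← map_mul, txy, map_one]
  inv_val := by
    rw [← map_mul, ← map_one ((socIdeal K).ringCon.mkₐ K)]
    refine ((RingCon.eq _).2 ?_).symm
    rw [TwoSidedIdeal.rel_iff]
    exact TwoSidedIdeal.subset_span rfl

/-- The inverse map. -/
def tpsi : LaurentPolynomial K →ₐ[K] (socIdeal K).ringCon.Quotient :=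
  AddMonoidAlgebra.lift K _ ℤ ((Units.coeHom _).comp (zpowersHom _ (tunit K)))

lemma tpsi_T (n : ℤ) : tpsi K (LaurentPolynomial.T n) = ((tunit K ^ n : _ˣ) : _) := by
  rw [tpsi, LaurentPolynomial.T, AddMonoidAlgebra.lift_single, one_smul]
  rfl

lemma tpsi_comp : (tpsi K).comp ((socIdeal K).ringCon.liftₐ (tphi K) (tphi_le K)) =
    AlgHom.id K _ := by
  apply RingCon.Quotient.hom_extₐ
  apply RingQuot.ringQuot_ext'
  apply FreeAlgebra.hom_ext
  funext i
  fin_cases i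
  · change tpsi K (tphi K (tx K)) = (socIdeal K).ringCon.mkₐ K (tx K)
    rw [tphi_x, tpsi_T, zpow_one]; rfl
  · change tpsi K (tphi K (ty K)) = (socIdeal K).ringCon.mkₐ K (ty K)
    rw [tphi_y, tpsi_T, zpow_neg_one]; rfl

lemma tphi_comp : ((socIdeal K).ringCon.liftₐ (tphi K) (tphi_le K)).comp (tpsi K) =
    AlgHom.id K _ := by
  set F := (socIdeal K).ringCon.liftₐ (tphi K) (tphi_le K) with hF
  have h1 : F (tpsi K (LaurentPolynomial.T 1)) = LaurentPolynomial.T 1 := by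
    rw [tpsi_T, zpow_one]; exact tphi_x K
  apply AddMonoidAlgebra.algHom_ext'
  · apply MonoidHom.ext_mint
    exact h1
  · ext

/-- `R/I ≅ K[X,X⁻¹]` as `K`-algebras, via `x ↦ X`, `y ↦ X⁻¹`. -/
theorem toeplitz_quotient_laurent :
    ∃ e : (socIdeal K).ringCon.Quotient ≃+* LaurentPolynomial K,
      e ((socIdeal K).ringCon.mk' (tx K)) = LaurentPolynomial.T 1 ∧
      e ((socIdeal K).ringCon.mk' (ty K)) = LaurentPolynomial.T (-1) ∧
      ∀ c : K, e ((socIdeal K).ringCon.mk' (algebraMap K (Toeplitz K) c)) =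
        algebraMap K (LaurentPolynomial K) c := by
  refine ⟨(AlgEquiv.ofAlgHom _ _ (tphi_comp K) (tpsi_comp K)).toRingEquiv, ?_, ?_, ?_⟩
  · exact tphi_x K
  · exact tphi_y K
  · exact fun c => (tphi K).commutes c
end
end

section
/- Let G be a group and K a field of characteristic zero (or more specifically K = ℂ). If a, b ∈ K[G] satisfy ab = 1, then ba = 1; that is, the group algebra K[G] is directly finite. Equivalently, the Jacobson algebra R = K⟨x,y⟩/(xy−1) does not embed as a K-algebra into any group algebra K[G]. -/
noncomputable section

variable (K : Type*) [Field K]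

/-! Kaplansky's theorem. -/

section HilbertPart

open scoped InnerProductSpace

lemma gadf_exists_unitary {G : Type*} {H : Type*} [NormedAddCommGroup H] [InnerProductSpace ℂ H]
    [CompleteSpace H] (b : HilbertBasis G ℂ H) (σ : Equiv.Perm G) :
    ∃ U : H ≃ₗᵢ[ℂ] H, ∀ g, U (b g) = b (σ g) := by
  classical
  have ho : Orthonormal ℂ (fun g => b (σ g)) := b.orthonormal.comp _ σ.injective
  have hr : Set.range (fun g => b (σ g)) = Set.range b := σ.surjective.range_comp b
  let c := HilbertBasis.mk ho (by rw [hr, b.dense_span])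
  refine ⟨b.repr.trans c.repr.symm, fun g => ?_⟩
  rw [LinearIsometryEquiv.trans_apply, b.repr_self, c.repr_symm_single]
  simp [c]

lemma gadf_ext {G : Type*} {H : Type*} [NormedAddCommGroup H] [InnerProductSpace ℂ H]
    (b : HilbertBasis G ℂ H) {S T : H →L[ℂ] H} (h : ∀ g, S (b g) = T (b g)) : S = T := by
  refine ContinuousLinearMap.ext_on (s := Set.range b) ?_ ?_
  · rw [dense_iff_closure_eq, ← Submodule.topologicalClosure_coe, b.dense_span]; rfl
  · rintro _ ⟨g, rfl⟩; exact h g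

theorem gadf_idem {G : Type*} [Group G] (f : MonoidAlgebra ℂ G) (hf : f * f = f)
    (h1 : f.coeff 1 = 0) : f = 0 := by
  classical
  let H := lp (fun _ : G => ℂ) 2
  let b : HilbertBasis G ℂ H := default
  choose U hU using gadf_exists_unitary b
  let L : G →* (H →L[ℂ] H) :=
    { toFun := fun g => (U (Equiv.mulLeft g) : H →L[ℂ] H)
      map_one' := by
        apply gadf_ext b; intro g; simp [hU]
      map_mul' := by
        intro x y; apply gadf_ext b; intro g; simp [hU, mul_assoc] }
  have hL : ∀ g x, L g (b x) = b (g * x) := by intro g x; simp [L, hU]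
  let R : G → (H ≃ₗᵢ[ℂ] H) := fun g => U (Equiv.mulRight g)
  have hR : ∀ g x, R g (b x) = b (x * g) := by intro g x; simp [R, hU]
  have hRinv : ∀ g x, R g⁻¹ (R g x) = x := by
    intro g x
    have : ((R g⁻¹ : H →L[ℂ] H).comp (R g : H →L[ℂ] H)) = ContinuousLinearMap.id ℂ H := by
      apply gadf_ext b; intro g; simp [hR]
    simpa using congrArg (fun T => T x) this
  have hRL : ∀ g h x, R g (L h x) = L h (R g x) := by
    intro g h x
    have : ((R g : H →L[ℂ] H).comp (L h)) = (L h).comp (R g : H →L[ℂ] H) := by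
      apply gadf_ext b; intro g; simp [hR, hL, mul_assoc]
    simpa using congrArg (fun T => T x) this
  let F : MonoidAlgebra ℂ G →ₐ[ℂ] (H →L[ℂ] H) := MonoidAlgebra.lift ℂ _ G L
  have hFs : ∀ g r, F (MonoidAlgebra.single g r) = r • L g := by
    intro g r; simp [F]
  have hRF : ∀ g (f : MonoidAlgebra ℂ G) x, R g (F f x) = F f (R g x) := by
    intro g f x
    induction f using MonoidAlgebra.induction_linear with
    | zero => simp
    | add a c ha hc => simp [ha, hc]
    | single h r => simp [hFs, hRL]
  have hcoeff : ∀ (f : MonoidAlgebra ℂ G) g, ⟪b g, F f (b 1)⟫_ℂ = f.coeff g := by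
    intro f g
    induction f using MonoidAlgebra.induction_linear with
    | zero => simp
    | add a c ha hc => simp [ha, hc, inner_add_right]
    | single h r =>
      have := orthonormal_iff_ite.mp b.orthonormal g h
      simp [hFs, hL, inner_smul_right, this, Finsupp.single_apply, eq_comm]
  have hFF : ∀ x, F f (F f x) = F f x := by
    intro x
    have := congrArg (fun T => T x) (map_mul F f f)
    rw [hf] at this
    exact this.symm
  let W : Submodule ℂ H := ((1 - F f : H →L[ℂ] H) : H →ₗ[ℂ] H).ker
  have hW : ∀ x, x ∈ W ↔ F f x = x := by
    intro x
    rw [eq_comm, ← sub_eq_zero]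
    simp [W]
  have hWc : IsClosed (W : Set H) := ContinuousLinearMap.isClosed_ker (1 - F f)
  have : CompleteSpace W := hWc.completeSpace_coe
  let p := W.starProjection
  have hFp : ∀ x, F f (p x) = p x := fun x => (hW _).1 (Submodule.starProjection_apply_mem W x)
  have hpF : ∀ x, p (F f x) = F f x := fun x =>
    Submodule.starProjection_eq_self_iff.2 ((hW _).2 (hFF x))
  have hpR : ∀ g x, p (R g x) = R g (p x) := by
    intro g x
    apply Submodule.eq_starProjection_of_mem_of_inner_eq_zero
    · rw [hW, ← hRF, hFp]
    · intro w hw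
      have hw' : R g⁻¹ w ∈ W := by rw [hW, ← hRF, (hW w).1 hw]
      have := Submodule.starProjection_inner_eq_zero x _ hw'
      rw [← (R g).inner_map_map] at this
      have h2 := hRinv g⁻¹ w
      rw [inv_inv] at h2
      rwa [h2, map_sub] at this
  have htr : ∀ f : MonoidAlgebra ℂ G, ⟪b 1, p (F f (b 1))⟫_ℂ = ⟪b 1, F f (p (b 1))⟫_ℂ := by
    intro f
    induction f using MonoidAlgebra.induction_linear with
    | zero => simp
    | add a c ha hc => simp [ha, hc, inner_add_right]
    | single g r =>
      simp only [hFs, smul_apply, map_smul, inner_smul_right]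
      congr 1
      have e1 : L g (b 1) = R g (b 1) := by simp [hL, hR]
      rw [e1, hpR, ← (R g⁻¹).inner_map_map, hRinv, hR,
        ← (U (Equiv.mulLeft g)).inner_map_map, hU]
      simp [L]
  have hp0 : p (b 1) = 0 := by
    have h2 : ⟪b 1, p (b 1)⟫_ℂ = 0 := by
      rw [← hFp, ← htr, hpF, hcoeff, h1]
    have h3 : ⟪p (b 1), p (b 1)⟫_ℂ = 0 := by
      rw [Submodule.inner_starProjection_left_eq_right]
      rw [show p (p (b 1)) = p (b 1) from
        Submodule.starProjection_eq_self_iff.2 (Submodule.starProjection_apply_mem W _)]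
      exact h2
    exact inner_self_eq_zero.1 h3
  have hpg : ∀ g, p (b g) = 0 := by
    intro g
    have : b g = R g (b 1) := by simp [hR]
    rw [this, hpR, hp0, map_zero]
  ext g
  rw [← hcoeff, ← hpF, ← Submodule.inner_starProjection_left_eq_right]
  change ⟪p (b g), _⟫_ℂ = _
  rw [hpg]; simp

lemma gadf_trace {K G : Type*} [Field K] [Group G] (a b : MonoidAlgebra K G) :
    (a * b).coeff 1 = (b * a).coeff 1 := by
  classical
  induction a using MonoidAlgebra.induction_linear with
  | zero => simp
  | add a c ha hc => simp [ha, hc, add_mul, mul_add]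
  | single g r =>
    induction b using MonoidAlgebra.induction_linear with
    | zero => simp
    | add a c ha hc => simp [ha, hc, add_mul, mul_add]
    | single h s =>
      have : g * h = 1 ↔ h * g = 1 := mul_eq_one_comm
      simp [MonoidAlgebra.single_mul_single, Finsupp.single_apply, this, mul_comm]

theorem gadf_complex {G : Type*} [Group G] (a b : MonoidAlgebra ℂ G) (h : a * b = 1) :
    b * a = 1 := by
  have h2 : (1 - b * a) = 0 := by
    apply gadf_idem
    · have : b * a * (b * a) = b * a := by
        rw [mul_assoc, ← mul_assoc a, h, one_mul]
      simp only [mul_sub, sub_mul, this, mul_one, one_mul, sub_self, sub_zero]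
    · have := gadf_trace a b
      rw [h] at this
      simp [← this]
  exact (sub_eq_zero.1 h2).symm

end HilbertPart

open Cardinal in
lemma gadf_embed {k : Type*} [Field k] [CharZero k] (hk : #k ≤ ℵ₀) : Nonempty (k →+* ℂ) := by
  let A := AlgebraicClosure (FractionRing (MvPolynomial ℝ k))
  have hM : #(MvPolynomial ℝ k) = 𝔠 := by
    rw [MvPolynomial.cardinalMk_eq_max_lift]
    have h1 : Cardinal.lift.{0} #k ≤ 𝔠 := by
      simpa using hk.trans aleph0_le_continuum
    simp only [mk_real, lift_continuum]
    rw [max_eq_right h1, max_eq_left aleph0_le_continuum]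
  have hF : #(FractionRing (MvPolynomial ℝ k)) = 𝔠 := by
    rw [FractionRing.cardinalMk, hM]
  have hA : #A = 𝔠 := by
    apply le_antisymm
    · have := Algebra.IsAlgebraic.cardinalMk_le_max (FractionRing (MvPolynomial ℝ k)) A
      rwa [hF, max_eq_left aleph0_le_continuum] at this
    · rw [← hF]
      exact mk_le_of_injective (algebraMap (FractionRing (MvPolynomial ℝ k)) A).injective
  have : CharZero A := charZero_of_injective_algebraMap (algebraMap k A).injective
  obtain ⟨e⟩ := IsAlgClosed.ringEquiv_of_equiv_of_charZero (K := A) (L := ℂ)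
    (by rw [hA]; exact aleph0_lt_continuum)
    (by rw [← lift_mk_eq', hA, mk_complex]; simp)
  exact ⟨(e : A →+* ℂ).comp (algebraMap k A)⟩

lemma gadf_map_inj {R S G : Type*} [Field R] [Field S] [Group G] (f : R →+* S) :
    Function.Injective (MonoidAlgebra.mapRingHom G f) := by
  intro x y h
  ext g
  have := congrArg (fun z => z.coeff g) h
  apply f.injective
  simpa using this

lemma gadf_lift {K G : Type*} [Field K] [Group G] (k : Subfield K) (a : MonoidAlgebra K G)
    (h : ∀ g, a.coeff g ∈ k) : ∃ a', MonoidAlgebra.mapRingHom G k.subtype a' = a := by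
  refine ⟨⟨Finsupp.onFinset a.coeff.support (fun g => ⟨a.coeff g, h g⟩) ?_⟩, ?_⟩
  · intro g hg
    simpa [Subtype.ext_iff] using hg
  · ext g
    simp

open Cardinal in
theorem gadf_main {K G : Type*} [Field K] [CharZero K] [Group G] (a b : MonoidAlgebra K G)
    (h : a * b = 1) : b * a = 1 := by
  let s : Set K := Set.range a.coeff ∪ Set.range b.coeff
  have hs : s.Countable := (a.coeff.finite_range.union b.coeff.finite_range).countable
  let k := Subfield.closure s
  have hk : #k ≤ ℵ₀ := (Subfield.cardinalMk_closure_le_max s).trans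
    (max_le (Cardinal.le_aleph0_iff_set_countable.2 hs) le_rfl)
  have : CharZero k := k.subtype.charZero
  obtain ⟨φ⟩ := gadf_embed hk
  obtain ⟨a', ha⟩ := gadf_lift k a fun g => Subfield.subset_closure (Or.inl ⟨g, rfl⟩)
  obtain ⟨b', hb⟩ := gadf_lift k b fun g => Subfield.subset_closure (Or.inr ⟨g, rfl⟩)
  have h' : a' * b' = 1 := by
    apply gadf_map_inj k.subtype
    rw [map_mul, ha, hb, h, map_one]
  have h2 : b' * a' = 1 := by
    apply gadf_map_inj φ
    rw [map_mul, map_one]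
    apply gadf_complex
    rw [← map_mul, h', map_one]
  rw [← ha, ← hb, ← map_mul, h2, map_one]

lemma gadf_toeplitz (K : Type*) [Field K] : ty K * tx K ≠ 1 := by
  let X : (ℕ → K) →ₗ[K] (ℕ → K) := LinearMap.funLeft K K Nat.succ
  let Y : (ℕ → K) →ₗ[K] (ℕ → K) :=
    { toFun := fun v n => Nat.casesOn n 0 v
      map_add' := by intro u v; funext n; cases n <;> simp
      map_smul' := by intro u v; funext n; cases n <;> simp }
  let ψ : Toeplitz K →ₐ[K] Module.End K (ℕ → K) :=
    RingQuot.liftAlgHom K ⟨FreeAlgebra.lift K ![X, Y], by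
      rintro _ _ ⟨⟩
      simp only [map_mul, FreeAlgebra.lift_ι_apply, map_one]
      rfl⟩
  intro h
  have h2 := congrArg ψ h
  simp only [tx, ty, map_mul, map_one, ψ, RingQuot.liftAlgHom_mkAlgHom_apply,
    FreeAlgebra.lift_ι_apply] at h2
  have h3 := congrFun (congrArg (fun T => T (fun _ => 1)) h2) 0
  exact zero_ne_one h3

lemma gadf_txty (K : Type*) [Field K] : tx K * ty K = 1 := by
  have := RingQuot.mkAlgHom_rel K (ToeplitzRel.rel (K := K))
  rwa [map_mul, map_one] at this

/-- Kaplansky's theorem in characteristic zero: for any group `G` and field `K` of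
characteristic zero, the group algebra `K[G]` is directly finite; equivalently, the
Jacobson algebra `R = K⟨x,y⟩/(xy-1)` does not embed as a `K`-algebra into any group
algebra `K[G]`. -/
theorem groupAlgebra_directlyFinite_char_zero [CharZero K] :
    (∀ (G : Type*) [Group G] (a b : MonoidAlgebra K G), a * b = 1 → b * a = 1) ∧
    (∀ (G : Type*) [Group G] (φ : Toeplitz K →ₐ[K] MonoidAlgebra K G),
      ¬ Function.Injective φ) := by
  refine ⟨fun G _ a b h => gadf_main a b h, fun G _ φ hφ => gadf_toeplitz K (hφ ?_)⟩
  rw [map_mul, map_one]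
  apply gadf_main
  rw [← map_mul, gadf_txty, map_one]
end
end
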